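/- The limit as n → ∞ of n^{5/2} · ( (log p(n+1))/(n+1) + (log p(n-1))/(n-1) - 2·(log p(n))/n ) equals 3π/√24. -/

import Mathlib

open Real Filter Topology

/-- The partition function, as a real number. -/
noncomputable def p (n : ℕ) : ℝ := (Fintype.card (Nat.Partition n) : ℝ)

namespace PartitionAsymptotics

/-- The product of the two (shifted) indices of the double series below. -/
def idx (x : ℕ × ℕ) : ℝ := ((x.1 : ℝ) + 1) * ((x.2 : ℝ) + 1)

lemma idx_pos (x : ℕ × ℕ) : 0 < idx x := by unfold idx; positivity

/-- `∑_{j, k ≥ 1} (j k) ^ a / j * exp (- j k t)`: up to sign, the `a`-th derivative of the logarithm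
of the generating function of partitions at `exp (-t)`. -/
noncomputable def lambertSum (a : ℕ) (t : ℝ) : ℝ :=
  ∑' x : ℕ × ℕ, idx x ^ a / (x.1 + 1) * exp (-(idx x * t))

lemma summable_inv_succ_sq : Summable fun n : ℕ => 1 / ((n : ℝ) + 1) ^ 2 := by
  simpa using (summable_nat_add_iff 1).mpr (Real.summable_one_div_nat_pow.mpr one_lt_two)

lemma hasSum_inv_succ_sq : HasSum (fun n : ℕ => 1 / ((n : ℝ) + 1) ^ 2) (π ^ 2 / 6) := by
  simpa using (hasSum_nat_add_iff' 1).mpr hasSum_zeta_two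

lemma summable_inv_idx_sq : Summable fun x : ℕ × ℕ => 1 / idx x ^ 2 := by
  have := summable_inv_succ_sq.mul_of_nonneg summable_inv_succ_sq
    (fun n => by positivity) (fun n => by positivity)
  refine this.congr fun x => ?_
  unfold idx
  rw [mul_pow]
  field_simp

lemma lambertSum_term_le (a : ℕ) {t : ℝ} (ht : 0 < t) (x : ℕ × ℕ) :
    idx x ^ a / (x.1 + 1) * exp (-(idx x * t)) ≤
      ((a + 2).factorial / t ^ (a + 2)) * (1 / idx x ^ 2) := by
  have hx := idx_pos x
  have h := Real.pow_div_factorial_le_exp (idx x * t) (by positivity) (a + 2)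
  rw [exp_neg]
  have h1 : idx x ^ a / ((x.1 : ℝ) + 1) ≤ idx x ^ a :=
    div_le_self (by positivity) (by linarith [Nat.cast_nonneg (α := ℝ) x.1])
  calc _ ≤ idx x ^ a * ((idx x * t) ^ (a + 2) / (a + 2).factorial)⁻¹ := by gcongr
    _ = _ := by
      rw [mul_pow, pow_add]
      field_simp

lemma lambertSum_term_nonneg (a : ℕ) (t : ℝ) (x : ℕ × ℕ) :
    0 ≤ idx x ^ a / (x.1 + 1) * exp (-(idx x * t)) := by
  have hx := idx_pos x
  positivity

lemma summable_lambertSum (a : ℕ) {t : ℝ} (ht : 0 < t) :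
    Summable fun x : ℕ × ℕ => idx x ^ a / (x.1 + 1) * exp (-(idx x * t)) :=
  .of_nonneg_of_le (lambertSum_term_nonneg a t) (lambertSum_term_le a ht)
    (summable_inv_idx_sq.mul_left _)

lemma continuousOn_lambertSum (a : ℕ) : ContinuousOn (lambertSum a) (Set.Ioi 0) := by
  intro t ht
  have ht : 0 < t := ht
  have h : ContinuousOn (lambertSum a) (Set.Ici (t / 2)) := by
    refine continuousOn_tsum (fun x => by fun_prop) (summable_lambertSum a (half_pos ht)) ?_
    intro x s hs
    have hx := idx_pos x
    rw [Real.norm_of_nonneg (lambertSum_term_nonneg a s x)]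
    gcongr
    exact hs
  exact (h.continuousAt (Ici_mem_nhds (by linarith))).continuousWithinAt

/-- The normalised inner sum `y ^ (a + 1) * ∑_{k ≥ 1} k ^ a * exp (- k y)`. -/
noncomputable def innerSum (a : ℕ) (y : ℝ) : ℝ :=
  y ^ (a + 1) * ∑' k : ℕ, ((k : ℝ) + 1) ^ a * exp (-((k + 1) * y))

lemma exp_neg_succ_mul (k : ℕ) (y : ℝ) :
    exp (-(((k : ℝ) + 1) * y)) = exp (-y) * exp (-y) ^ k := by
  rw [← Real.exp_nat_mul, ← Real.exp_add]; ring_nf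

lemma tsum_exp_neg_succ_mul {y : ℝ} (hy : 0 < y) :
    HasSum (fun k : ℕ => exp (-(((k : ℝ) + 1) * y))) (exp (-y) * (1 - exp (-y))⁻¹) := by
  simp_rw [exp_neg_succ_mul]
  exact (hasSum_geometric_of_lt_one (exp_pos _).le (by simpa using hy)).mul_left _

lemma innerSum_term_le (a k : ℕ) {y : ℝ} (hy : 0 < y) :
    ((k : ℝ) + 1) ^ a * exp (-((k + 1) * y)) ≤
      (a.factorial * 2 ^ a / y ^ a) * exp (-((k + 1) * (y / 2))) := by
  have h := Real.pow_div_factorial_le_exp (((k : ℝ) + 1) * (y / 2)) (by positivity) a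
  have h2 : exp (-(((k : ℝ) + 1) * y)) =
      exp (-((k + 1) * (y / 2))) * exp (-((k + 1) * (y / 2))) := by
    rw [← Real.exp_add]; ring_nf
  rw [h2, ← mul_assoc]
  gcongr
  rw [exp_neg]
  calc _ ≤ ((k : ℝ) + 1) ^ a * (((k + 1) * (y / 2)) ^ a / a.factorial)⁻¹ := by gcongr
    _ = _ := by
      rw [mul_pow, div_pow]
      field_simp

lemma exp_neg_mul_inv_le {y : ℝ} (hy : 0 < y) : exp (-y) * (1 - exp (-y))⁻¹ ≤ 1 / y := by
  have h : exp (-y) < 1 := by simpa using hy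
  have h1 : y + 1 ≤ exp y := Real.add_one_le_exp y
  rw [← div_eq_mul_inv, div_le_div_iff₀ (by linarith) hy]
  have h2 : exp (-y) * exp y = 1 := by rw [← Real.exp_add]; simp
  nlinarith [exp_pos (-y)]

lemma innerSum_nonneg (a : ℕ) {y : ℝ} (hy : 0 < y) : 0 ≤ innerSum a y :=
  mul_nonneg (by positivity) (tsum_nonneg fun k => by positivity)

lemma innerSum_le (a : ℕ) {y : ℝ} (hy : 0 < y) :
    innerSum a y ≤ a.factorial * 2 ^ (a + 1) := by
  have hs := ((tsum_exp_neg_succ_mul (half_pos hy)).mul_left (a.factorial * 2 ^ a / y ^ a : ℝ))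
  have h := (Summable.of_nonneg_of_le (fun k => by positivity)
    (fun k => innerSum_term_le a k hy) hs.summable).tsum_le_tsum
      (fun k => innerSum_term_le a k hy) hs.summable
  rw [hs.tsum_eq] at h
  have h2 := exp_neg_mul_inv_le (half_pos hy)
  unfold innerSum
  calc _ ≤ y ^ (a + 1) * ((a.factorial * 2 ^ a / y ^ a : ℝ) * (1 / (y / 2))) := by
        gcongr
        exact h.trans (by gcongr)
    _ = _ := by
      field_simp
      ring

lemma tendsto_div_one_sub_exp_neg :
    Tendsto (fun y : ℝ => y / (1 - exp (-y))) (𝓝[>] 0) (𝓝 1) := by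
  have h : HasDerivAt (fun y : ℝ => 1 - exp (-y)) 1 0 := by
    simpa using ((hasDerivAt_neg (0 : ℝ)).exp.const_sub 1)
  have h2 := (h.tendsto_slope_zero_right).inv₀ one_ne_zero
  refine (h2.congr fun y => ?_).trans (by simp)
  simp [div_eq_mul_inv, mul_comm]

lemma tendsto_exp_neg : Tendsto (fun y : ℝ => exp (-y)) (𝓝[>] 0) (𝓝 1) := by
  have h : Continuous fun y : ℝ => exp (-y) := by fun_prop
  simpa using (h.tendsto 0).mono_left nhdsWithin_le_nhds

lemma tendsto_id_zero : Tendsto (fun y : ℝ => y) (𝓝[>] 0) (𝓝 0) :=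
  tendsto_id.mono_left nhdsWithin_le_nhds

lemma tendsto_innerSum_zero : Tendsto (innerSum 0) (𝓝[>] 0) (𝓝 1) := by
  have h := tendsto_div_one_sub_exp_neg.mul tendsto_exp_neg
  rw [mul_one] at h
  refine h.congr' ?_
  filter_upwards [self_mem_nhdsWithin] with y hy
  simp only [innerSum, pow_zero, one_mul, (tsum_exp_neg_succ_mul hy).tsum_eq]
  ring

lemma tendsto_innerSum_one : Tendsto (innerSum 1) (𝓝[>] 0) (𝓝 1) := by
  have h := (tendsto_div_one_sub_exp_neg.pow 2).mul tendsto_exp_neg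
  rw [mul_one, one_pow] at h
  refine h.congr' ?_
  filter_upwards [self_mem_nhdsWithin] with y hy
  have hr : ‖exp (-y)‖ < 1 := by simpa using hy
  have hs := (hasSum_choose_mul_geometric_of_norm_lt_one 1 hr).mul_left (exp (-y))
  have : ∑' k : ℕ, ((k : ℝ) + 1) ^ 1 * exp (-((k + 1) * y)) =
      exp (-y) * (1 / (1 - exp (-y)) ^ (1 + 1)) := by
    rw [← hs.tsum_eq]
    refine tsum_congr fun k => ?_
    rw [exp_neg_succ_mul]
    simp
    ring
  rw [innerSum, this]
  generalize 1 - exp (-y) = d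
  ring

lemma tendsto_innerSum_two : Tendsto (innerSum 2) (𝓝[>] 0) (𝓝 2) := by
  have h := ((tendsto_div_one_sub_exp_neg.pow 3).mul tendsto_exp_neg).const_mul 2
  have h' := (tendsto_id_zero.mul (tendsto_div_one_sub_exp_neg.pow 2)).mul tendsto_exp_neg
  have h := h.sub h'
  rw [show (2 : ℝ) * (1 ^ 3 * 1) - 0 * 1 ^ 2 * 1 = 2 by norm_num] at h
  refine h.congr' ?_
  filter_upwards [self_mem_nhdsWithin] with y hy
  have hr : ‖exp (-y)‖ < 1 := by simpa using hy
  have hs := (((hasSum_choose_mul_geometric_of_norm_lt_one 2 hr).mul_left 2).sub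
    (hasSum_choose_mul_geometric_of_norm_lt_one 1 hr)).mul_left (exp (-y))
  have : ∑' k : ℕ, ((k : ℝ) + 1) ^ 2 * exp (-((k + 1) * y)) =
      exp (-y) * (2 * (1 / (1 - exp (-y)) ^ (2 + 1)) - 1 / (1 - exp (-y)) ^ (1 + 1)) := by
    rw [← hs.tsum_eq]
    refine tsum_congr fun k => ?_
    rw [exp_neg_succ_mul, Nat.cast_choose_two]
    push_cast
    simp
    ring
  rw [innerSum, this]
  generalize 1 - exp (-y) = d
  ring

lemma pow_mul_lambertSum (a : ℕ) {t : ℝ} (ht : 0 < t) :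
    t ^ (a + 1) * lambertSum a t =
      ∑' j : ℕ, 1 / ((j : ℝ) + 1) ^ 2 * innerSum a (((j : ℝ) + 1) * t) := by
  rw [lambertSum, (summable_lambertSum a ht).tsum_prod, ← tsum_mul_left]
  refine tsum_congr fun j => ?_
  rw [innerSum, ← tsum_mul_left, ← tsum_mul_left, ← tsum_mul_left]
  refine tsum_congr fun k => ?_
  simp only [idx]
  rw [show ((k : ℝ) + 1) * ((j + 1) * t) = (j + 1) * (k + 1) * t by ring]
  simp only [mul_pow]
  field_simp
  ring

lemma tendsto_pow_mul_lambertSum {a : ℕ} {c : ℝ} (h : Tendsto (innerSum a) (𝓝[>] 0) (𝓝 c)) :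
    Tendsto (fun t => t ^ (a + 1) * lambertSum a t) (𝓝[>] 0) (𝓝 (π ^ 2 / 6 * c)) := by
  have key : Tendsto (fun t : ℝ => ∑' j : ℕ, 1 / ((j : ℝ) + 1) ^ 2 * innerSum a (((j : ℝ) + 1) * t))
      (𝓝[>] 0) (𝓝 (∑' j : ℕ, 1 / ((j : ℝ) + 1) ^ 2 * c)) := by
    refine tendsto_tsum_of_dominated_convergence
      (summable_inv_succ_sq.mul_right (a.factorial * 2 ^ (a + 1) : ℝ)) (fun j => ?_) ?_
    · refine (h.comp ?_).const_mul _
      refine tendsto_nhdsWithin_iff.mpr ⟨?_, ?_⟩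
      · simpa using tendsto_id_zero.const_mul ((j : ℝ) + 1)
      · filter_upwards [self_mem_nhdsWithin] with t ht
        have : 0 < t := ht
        simp only [Set.mem_Ioi]; positivity
    · filter_upwards [self_mem_nhdsWithin] with t ht j
      have ht : 0 < t := ht
      have hj : 0 < ((j : ℝ) + 1) * t := by positivity
      rw [norm_mul, Real.norm_of_nonneg (innerSum_nonneg a hj), Real.norm_of_nonneg (by positivity)]
      gcongr
      exact innerSum_le a hj
  rw [tsum_mul_right, hasSum_inv_succ_sq.tsum_eq] at key
  refine key.congr' ?_
  filter_upwards [self_mem_nhdsWithin] with t ht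
  exact (pow_mul_lambertSum a ht).symm

lemma pow_mul_lambertSum_le (a : ℕ) {t : ℝ} (ht : 0 < t) :
    t ^ (a + 1) * lambertSum a t ≤ π ^ 2 / 6 * (a.factorial * 2 ^ (a + 1)) := by
  rw [pow_mul_lambertSum a ht, ← hasSum_inv_succ_sq.tsum_eq, ← tsum_mul_right]
  have hle (j : ℕ) : 1 / ((j : ℝ) + 1) ^ 2 * innerSum a (((j : ℝ) + 1) * t) ≤
      1 / ((j : ℝ) + 1) ^ 2 * (a.factorial * 2 ^ (a + 1)) := by
    gcongr
    exact innerSum_le a (by positivity)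
  refine Summable.tsum_le_tsum hle ?_ (summable_inv_succ_sq.mul_right _)
  exact .of_nonneg_of_le
    (fun j => mul_nonneg (by positivity) (innerSum_nonneg a (by positivity))) hle
    (summable_inv_succ_sq.mul_right _)

section GeneratingFunction

open PowerSeries
open scoped PowerSeries.WithPiTopology

/-- The power series `f` converges absolutely at `z`, with sum `S`. -/
def EvalsTo (f : PowerSeries ℂ) (z S : ℂ) : Prop :=
  (Summable fun n => ‖coeff n f * z ^ n‖) ∧ HasSum (fun n => coeff n f * z ^ n) S

lemma EvalsTo.one (z : ℂ) : EvalsTo 1 z 1 := by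
  have h : (fun n : ℕ => coeff n (1 : PowerSeries ℂ) * z ^ n) =
      fun n => if n = 0 then 1 else 0 := by
    ext n
    rw [PowerSeries.coeff_one]
    split_ifs with hn <;> simp [hn]
  have hs : HasSum (fun n : ℕ => coeff n (1 : PowerSeries ℂ) * z ^ n) 1 := by
    rw [h]
    exact hasSum_ite_eq 0 1
  exact ⟨hs.summable.norm, hs⟩

lemma EvalsTo.mul {f g : PowerSeries ℂ} {z S T : ℂ} (hf : EvalsTo f z S) (hg : EvalsTo g z T) :
    EvalsTo (f * g) z (S * T) := by
  have h : (fun n : ℕ => coeff n (f * g) * z ^ n) = fun n =>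
      ∑ kl ∈ Finset.HasAntidiagonal.antidiagonal n,
        coeff kl.1 f * z ^ kl.1 * (coeff kl.2 g * z ^ kl.2) := by
    ext n
    rw [PowerSeries.coeff_mul, Finset.sum_mul]
    refine Finset.sum_congr rfl fun kl hkl => ?_
    rw [← Finset.HasAntidiagonal.mem_antidiagonal.mp hkl, pow_add]
    ring
  have hs := summable_norm_sum_mul_antidiagonal_of_summable_norm hf.1 hg.1
  have ht := tsum_mul_tsum_eq_tsum_sum_antidiagonal_of_summable_norm hf.1 hg.1
  rw [hf.2.tsum_eq, hg.2.tsum_eq] at ht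
  refine ⟨by simpa only [funext_iff.mp h] using hs, ?_⟩
  rw [h, ht]
  exact hs.of_norm.hasSum

lemma EvalsTo.prod {f : ℕ → PowerSeries ℂ} {z : ℂ} {S : ℕ → ℂ} (h : ∀ i, EvalsTo (f i) z (S i))
    (K : ℕ) : EvalsTo (∏ i ∈ Finset.range K, f i) z (∏ i ∈ Finset.range K, S i) := by
  induction K with
  | zero => simpa using EvalsTo.one z
  | succ K ih =>
    rw [Finset.prod_range_succ, Finset.prod_range_succ]
    exact ih.mul (h K)

lemma coeff_tsum_X_pow (i n : ℕ) :
    coeff n (∑' j : ℕ, (X : PowerSeries ℂ) ^ ((i + 1) * j)) = if (i + 1) ∣ n then 1 else 0 := by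
  have hs : Summable fun j : ℕ => (X : PowerSeries ℂ) ^ ((i + 1) * j) := by
    simp_rw [pow_mul]
    exact WithPiTopology.summable_pow_of_constantCoeff_eq_zero (by simp)
  rw [hs.map_tsum (coeff n) (WithPiTopology.continuous_coeff ℂ n)]
  simp_rw [PowerSeries.coeff_X_pow]
  split_ifs with h
  · obtain ⟨m, rfl⟩ := h
    rw [tsum_eq_single m]
    · simp
    · intro b hb
      rw [if_neg]
      intro h
      exact hb (Nat.eq_of_mul_eq_mul_left (Nat.succ_pos i) h).symm
  · refine (tsum_congr fun j => if_neg ?_).trans tsum_zero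
    rintro rfl
    exact h (dvd_mul_right _ _)

lemma evalsTo_tsum_X_pow {z : ℂ} (hz : ‖z‖ < 1) (i : ℕ) :
    EvalsTo (∑' j : ℕ, (X : PowerSeries ℂ) ^ ((i + 1) * j)) z (1 - z ^ (i + 1))⁻¹ := by
  have hinj : Function.Injective fun j : ℕ => (i + 1) * j :=
    fun a b h => Nat.eq_of_mul_eq_mul_left (Nat.succ_pos i) h
  have hzi : ‖z ^ (i + 1)‖ < 1 := by
    rw [norm_pow]
    exact pow_lt_one₀ (norm_nonneg z) hz (Nat.succ_ne_zero i)
  have hs : HasSum (fun n => coeff n (∑' j : ℕ, (X : PowerSeries ℂ) ^ ((i + 1) * j)) * z ^ n)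
      (1 - z ^ (i + 1))⁻¹ := by
    rw [← hinj.hasSum_iff]
    · refine (hasSum_geometric_of_norm_lt_one hzi).congr_fun fun j => ?_
      rw [Function.comp, coeff_tsum_X_pow, if_pos (dvd_mul_right _ _), one_mul, pow_mul]
    · intro n hn
      rw [coeff_tsum_X_pow, if_neg, zero_mul]
      rintro ⟨j, rfl⟩
      exact hn ⟨j, rfl⟩
  exact ⟨hs.summable.norm, hs⟩

/-- The number of partitions of `n` into parts at most `K`. -/
noncomputable def boundedCard (K n : ℕ) : ℕ := (Nat.Partition.restricted n (· ≤ K)).card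

lemma boundedCard_le (K n : ℕ) : boundedCard K n ≤ Fintype.card (Nat.Partition n) :=
  Finset.card_le_univ _

lemma boundedCard_eq {K n : ℕ} (h : n ≤ K) : boundedCard K n = Fintype.card (Nat.Partition n) := by
  unfold boundedCard Nat.Partition.restricted
  rw [Finset.filter_true_of_mem, Finset.card_univ]
  exact fun x _ i hi => (Nat.Partition.le_of_mem_parts hi).trans h

lemma hasSum_boundedCard {z : ℂ} (hz : ‖z‖ < 1) (K : ℕ) :
    HasSum (fun n => (boundedCard K n : ℂ) * z ^ n)
      (∏ i ∈ Finset.range K, (1 - z ^ (i + 1))⁻¹) := by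
  have h := Nat.Partition.hasProd_powerSeriesMk_card_restricted ℂ (· ≤ K)
  have h2 : HasProd (fun i ↦ if i + 1 ≤ K then ∑' j : ℕ, (X : PowerSeries ℂ) ^ ((i + 1) * j) else 1)
      (∏ i ∈ Finset.range K, ∑' j : ℕ, (X : PowerSeries ℂ) ^ ((i + 1) * j)) := by
    have := hasProd_prod_of_ne_finset_one (L := .unconditional ℕ) (s := Finset.range K)
      (f := fun i ↦ if i + 1 ≤ K then ∑' j : ℕ, (X : PowerSeries ℂ) ^ ((i + 1) * j) else 1)
      (fun i hi => if_neg (by simpa using hi))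
    convert this using 1
    refine Finset.prod_congr rfl fun i hi => (if_pos ?_).symm
    simpa using hi
  have h3 := (EvalsTo.prod (evalsTo_tsum_X_pow hz) K).2
  rw [← h.unique h2] at h3
  simpa [boundedCard] using h3

end GeneratingFunction

/-- The double series `∑_{j, k ≥ 1} exp (- j k s) / j`, the logarithm of the generating function of
partitions at `exp (-s)`. -/
noncomputable def logGen (s : ℂ) : ℂ :=
  ∑' x : ℕ × ℕ, ((1 / ((x.1 : ℝ) + 1) : ℝ) : ℂ) * Complex.exp (-(idx x * s))

lemma norm_logGen_term (s : ℂ) (x : ℕ × ℕ) :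
    ‖((1 / ((x.1 : ℝ) + 1) : ℝ) : ℂ) * Complex.exp (-(idx x * s))‖ =
      idx x ^ 0 / (x.1 + 1) * exp (-(idx x * s.re)) := by
  rw [norm_mul, Complex.norm_exp, Complex.norm_real, Real.norm_of_nonneg (by positivity)]
  simp

lemma summable_logGen {s : ℂ} (hs : 0 < s.re) : Summable fun x : ℕ × ℕ =>
    ((1 / ((x.1 : ℝ) + 1) : ℝ) : ℂ) * Complex.exp (-(idx x * s)) := by
  refine Summable.of_norm ?_
  simp_rw [norm_logGen_term]
  exact summable_lambertSum 0 hs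

lemma logGen_ofReal (t : ℝ) : logGen t = lambertSum 0 t := by
  rw [logGen, lambertSum, Complex.ofReal_tsum]
  refine tsum_congr fun x => ?_
  push_cast
  simp

lemma norm_exp_neg_lt_one {s : ℂ} (hs : 0 < s.re) : ‖Complex.exp (-s)‖ < 1 := by
  rw [Complex.norm_exp]
  simpa using hs

lemma tendsto_prod_logGen {s : ℂ} (hs : 0 < s.re) :
    Tendsto (fun K => ∏ i ∈ Finset.range K, (1 - Complex.exp (-s) ^ (i + 1))⁻¹) atTop
      (𝓝 (Complex.exp (logGen s))) := by
  have hz := norm_exp_neg_lt_one hs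
  set z := Complex.exp (-s) with hzdef
  have hzi (i : ℕ) : ‖z ^ (i + 1)‖ < 1 := by
    rw [norm_pow]
    exact pow_lt_one₀ (norm_nonneg z) hz (Nat.succ_ne_zero i)
  have hsum : HasSum (fun x : ℕ × ℕ =>
      ((1 / ((x.2 : ℝ) + 1) : ℝ) : ℂ) * Complex.exp (-(idx x.swap * s))) (logGen s) :=
    (Equiv.prodComm ℕ ℕ).hasSum_iff.mpr (summable_logGen hs).hasSum
  have hrow (k : ℕ) : HasSum (fun j : ℕ =>
      ((1 / ((j : ℝ) + 1) : ℝ) : ℂ) * Complex.exp (-(idx (j, k) * s)))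
      (-Complex.log (1 - z ^ (k + 1))) := by
    refine (Complex.hasSum_taylorSeries_neg_log' (hzi k)).congr_fun fun j => ?_
    rw [hzdef, ← pow_mul, ← Complex.exp_nat_mul]
    simp only [idx]
    push_cast
    ring_nf
  have h := (hsum.prod_fiberwise hrow).tendsto_sum_nat
  refine ((Complex.continuous_exp.tendsto _).comp h).congr fun K => ?_
  rw [Function.comp, Complex.exp_sum]
  refine Finset.prod_congr rfl fun i _ => ?_
  rw [Complex.exp_neg, Complex.exp_log]
  intro h0
  have : z ^ (i + 1) = 1 := by linear_combination -h0
  simpa [this] using hzi i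

lemma summable_p_mul_exp {t : ℝ} (ht : 0 < t) : Summable fun n : ℕ => p n * exp (-t) ^ n := by
  have hs : 0 < (t : ℂ).re := by simpa using ht
  obtain ⟨C, hC⟩ := (tendsto_prod_logGen hs).norm.bddAbove_range
  refine summable_of_sum_range_le (c := C) (fun n => by unfold p; positivity) fun N => ?_
  have h := hasSum_boundedCard (norm_exp_neg_lt_one hs) N
  have hre : HasSum (fun n => (boundedCard N n : ℝ) * exp (-t) ^ n)
      (∏ i ∈ Finset.range N, (1 - Complex.exp (-(t : ℂ)) ^ (i + 1))⁻¹).re := by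
    convert Complex.hasSum_re h using 2 with n
    rw [← Complex.ofReal_neg, ← Complex.ofReal_exp, ← Complex.ofReal_pow, ← Complex.ofReal_natCast,
      ← Complex.ofReal_mul, Complex.ofReal_re]
  calc ∑ n ∈ Finset.range N, p n * exp (-t) ^ n
      = ∑ n ∈ Finset.range N, (boundedCard N n : ℝ) * exp (-t) ^ n := by
        refine Finset.sum_congr rfl fun n hn => ?_
        rw [p, boundedCard_eq (Finset.mem_range.mp hn).le]
    _ ≤ _ := sum_le_hasSum _ (fun n _ => by positivity) hre
    _ ≤ _ := Complex.re_le_norm _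
    _ ≤ C := hC ⟨N, rfl⟩

/-- Euler's generating function of partitions, in exponential form. -/
lemma hasSum_p {s : ℂ} (hs : 0 < s.re) :
    HasSum (fun n : ℕ => (p n : ℂ) * Complex.exp (-s) ^ n) (Complex.exp (logGen s)) := by
  have hnorm (n : ℕ) : ‖Complex.exp (-s) ^ n‖ = exp (-s.re) ^ n := by
    rw [norm_pow, Complex.norm_exp, Complex.neg_re]
  have hp (n : ℕ) : 0 ≤ p n := by unfold p; positivity
  have hsum := summable_p_mul_exp hs
  have h : Tendsto (fun K : ℕ => ∑' n : ℕ, (boundedCard K n : ℂ) * Complex.exp (-s) ^ n) atTop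
      (𝓝 (∑' n : ℕ, (p n : ℂ) * Complex.exp (-s) ^ n)) := by
    refine tendsto_tsum_of_dominated_convergence hsum (fun n => ?_) (.of_forall fun K n => ?_)
    · refine tendsto_const_nhds.congr' ?_
      filter_upwards [eventually_ge_atTop n] with K hK
      rw [boundedCard_eq hK, p]
      simp
    · rw [norm_mul, hnorm, Complex.norm_natCast, p]
      gcongr
      exact boundedCard_le K n
  have h2 := tendsto_prod_logGen hs
  simp_rw [fun K => (hasSum_boundedCard (norm_exp_neg_lt_one hs) K).tsum_eq] at h
  rw [← tendsto_nhds_unique h h2]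
  refine Summable.hasSum (Summable.of_norm (hsum.congr fun n => ?_))
  rw [norm_mul, hnorm, Complex.norm_real, Real.norm_of_nonneg (hp n)]

lemma continuous_logGen_line {t : ℝ} (ht : 0 < t) :
    Continuous fun θ : ℝ => logGen (t - θ * Complex.I) := by
  refine continuous_tsum (fun x => by fun_prop) (summable_lambertSum 0 ht) fun x θ => ?_
  rw [norm_logGen_term]
  simp

lemma integral_exp_int_mul (k : ℤ) :
    ∫ θ in (-π)..π, Complex.exp (k * θ * Complex.I) = if k = 0 then 2 * (π : ℂ) else 0 := by
  split_ifs with h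
  · simp [h]
    ring
  · have hk : (k : ℂ) * Complex.I ≠ 0 := by simp [h]
    have := integral_exp_mul_complex (a := -π) (b := π) hk
    simp_rw [mul_right_comm (k : ℂ) _ Complex.I]
    rw [this]
    have h1 : Complex.exp (k * Complex.I * π) = Complex.exp (k * Complex.I * (-π : ℝ)) := by
      rw [Complex.exp_eq_exp_iff_exists_int]
      refine ⟨k, ?_⟩
      push_cast
      ring
    rw [h1]
    simp

/-- Cauchy's formula for the coefficients of the generating function of partitions. -/
lemma integral_exp_logGen {t : ℝ} (ht : 0 < t) (m : ℕ) :
    ∫ θ in (-π)..π, Complex.exp (logGen (t - θ * Complex.I)) * Complex.exp (-(m * θ * Complex.I)) =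
      2 * π * p m * Complex.exp (-(m * t)) := by
  have hsum := summable_p_mul_exp ht
  have hpt (θ : ℝ) : HasSum (fun n : ℕ => (p n * Complex.exp (-t) ^ n : ℂ) *
      Complex.exp (((n - m : ℤ) : ℂ) * θ * Complex.I))
      (Complex.exp (logGen (t - θ * Complex.I)) * Complex.exp (-(m * θ * Complex.I))) := by
    have h := (hasSum_p (s := t - θ * Complex.I) (by simpa using ht)).mul_right
      (Complex.exp (-(m * θ * Complex.I)))
    refine h.congr_fun fun n => ?_
    simp only [mul_assoc (p n : ℂ), ← Complex.exp_nat_mul, ← Complex.exp_add]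
    push_cast
    ring_nf
  have hcauchy := intervalIntegral.hasSum_integral_of_dominated_convergence
    (μ := MeasureTheory.volume) (a := -π) (b := π)
    (F := fun (n : ℕ) (θ : ℝ) => (p n * Complex.exp (-t) ^ n : ℂ) *
      Complex.exp (((n - m : ℤ) : ℂ) * θ * Complex.I))
    (f := fun θ => Complex.exp (logGen (t - θ * Complex.I)) * Complex.exp (-(m * θ * Complex.I)))
    (fun n _ => p n * exp (-t) ^ n)
    (fun n => (by fun_prop : Continuous _).aestronglyMeasurable)
    (fun n => .of_forall fun θ _ => ?_) (.of_forall fun _ _ => hsum) (by simp)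
    (.of_forall fun θ _ => hpt θ)
  · refine hcauchy.unique ?_
    simp_rw [intervalIntegral.integral_const_mul, integral_exp_int_mul]
    refine (hasSum_ite_eq m (2 * π * p m * Complex.exp (-(m * t)) : ℂ)).congr_fun fun n => ?_
    by_cases h : n = m
    · subst h
      rw [← Complex.exp_nat_mul]
      simp
      ring_nf
    · rw [if_neg h, if_neg (by omega), mul_zero]
  · rw [norm_mul, norm_mul, norm_pow, Complex.norm_exp, Complex.norm_exp, Complex.norm_real,
      Real.norm_of_nonneg (by unfold p; positivity)]
    simp

lemma norm_exp_mul_I_sub_taylor_le (y : ℝ) :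
    ‖Complex.exp (y * Complex.I) - 1 - y * Complex.I + (y : ℂ) ^ 2 / 2‖ ≤ 4 * |y| ^ 3 := by
  have hy : ‖(y : ℂ) * Complex.I‖ = |y| := by simp
  rcases le_total |y| 1 with h | h
  · have h1 := Complex.norm_exp_sub_sum_le_norm_mul_exp (y * Complex.I) 3
    rw [hy] at h1
    have h2 : Complex.exp (y * Complex.I) - 1 - y * Complex.I + (y : ℂ) ^ 2 / 2 =
        Complex.exp (y * Complex.I) -
          ∑ m ∈ Finset.range 3, ((y : ℂ) * Complex.I) ^ m / (m.factorial : ℂ) := by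
      simp [Finset.sum_range_succ, mul_pow, Complex.I_sq]
      ring
    rw [h2]
    have h3 : exp |y| ≤ 4 := by
      have := Real.exp_one_lt_d9
      linarith [Real.exp_le_exp.mpr h]
    calc _ ≤ _ := h1
      _ ≤ |y| ^ 3 * 4 := by gcongr
      _ = _ := mul_comm _ _
  · have h1 : ‖Complex.exp (y * Complex.I)‖ = 1 := Complex.norm_exp_ofReal_mul_I y
    calc _ ≤ ‖Complex.exp (y * Complex.I)‖ + ‖(1 : ℂ)‖ + ‖(y : ℂ) * Complex.I‖ +
          ‖(y : ℂ) ^ 2 / 2‖ :=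
          (norm_add_le _ _).trans (by
            gcongr
            exact (norm_sub_le _ _).trans (by gcongr; exact norm_sub_le _ _))
      _ = 2 + |y| + |y| ^ 2 / 2 := by
          rw [h1, hy, norm_div, norm_pow, Complex.norm_real]
          norm_num
      _ ≤ _ := by nlinarith [mul_nonneg (sub_nonneg.mpr h) (abs_nonneg y), sq_nonneg (|y| - 1),
        mul_nonneg (sub_nonneg.mpr h) (sq_nonneg |y|)]

lemma hasSum_lambertSum (a : ℕ) {t : ℝ} (ht : 0 < t) :
    HasSum (fun x : ℕ × ℕ => idx x ^ a / (x.1 + 1) * exp (-(idx x * t))) (lambertSum a t) :=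
  (summable_lambertSum a ht).hasSum

lemma logGen_term_eq (t θ : ℝ) (x : ℕ × ℕ) :
    ((1 / ((x.1 : ℝ) + 1) : ℝ) : ℂ) * Complex.exp (-(idx x * (t - θ * Complex.I))) =
      ((idx x ^ 0 / (x.1 + 1) * exp (-(idx x * t)) : ℝ) : ℂ) *
        Complex.exp ((idx x * θ : ℝ) * Complex.I) := by
  rw [Complex.ofReal_mul, Complex.ofReal_exp, mul_assoc, ← Complex.exp_add]
  push_cast
  ring_nf

lemma hasSum_logGen_line {t : ℝ} (ht : 0 < t) (θ : ℝ) :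
    HasSum (fun x : ℕ × ℕ => ((idx x ^ 0 / (x.1 + 1) * exp (-(idx x * t)) : ℝ) : ℂ) *
        Complex.exp ((idx x * θ : ℝ) * Complex.I)) (logGen (t - θ * Complex.I)) := by
  simp_rw [← logGen_term_eq]
  exact (summable_logGen (by simpa using ht)).hasSum

lemma norm_logGen_sub_taylor_le {t : ℝ} (ht : 0 < t) (θ : ℝ) :
    ‖logGen (t - θ * Complex.I) - logGen t - θ * lambertSum 1 t * Complex.I +
      θ ^ 2 * lambertSum 2 t / 2‖ ≤ 4 * |θ| ^ 3 * lambertSum 3 t := by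
  have h (a : ℕ) := Complex.hasSum_ofReal.mpr (hasSum_lambertSum a ht)
  have hsum := (((hasSum_logGen_line ht θ).sub (h 0)).sub
    (((h 1).mul_left (θ : ℂ)).mul_right Complex.I)).add (((h 2).mul_left (θ ^ 2 : ℂ)).div_const 2)
  have hb := (hasSum_lambertSum 3 ht).mul_left (4 * |θ| ^ 3)
  rw [logGen_ofReal]
  refine hsum.norm_le_of_bounded hb fun x => ?_
  have hx := idx_pos x
  have ht := norm_exp_mul_I_sub_taylor_le (idx x * θ)
  have hw := lambertSum_term_nonneg 0 t x
  set w := idx x ^ 0 / (x.1 + 1) * exp (-(idx x * t)) with hwdef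
  have hwa (a : ℕ) : idx x ^ a / (x.1 + 1) * exp (-(idx x * t)) = idx x ^ a * w := by
    rw [hwdef]; ring
  rw [hwa 1, hwa 2, hwa 3]
  calc _ = ‖(w : ℂ) * (Complex.exp ((idx x * θ : ℝ) * Complex.I) - 1 -
        (idx x * θ : ℝ) * Complex.I + ((idx x * θ : ℝ) : ℂ) ^ 2 / 2)‖ := by
        congr 1
        push_cast
        ring
    _ ≤ w * (4 * |idx x * θ| ^ 3) := by
        rw [norm_mul, Complex.norm_real, Real.norm_of_nonneg hw]
        gcongr
    _ = _ := by
        rw [abs_mul, abs_of_pos hx]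
        ring

lemma sq_div_le_of_one_sub_exp_neg {t θ : ℝ} (ht : 0 < t) (ht1 : t ≤ 1) (hθ : |θ| ≤ π) :
    θ ^ 2 / (20 * (t * (t ^ 2 + θ ^ 2))) ≤
      exp (-t) * (1 - exp (-t))⁻¹ -
        (Complex.exp (-(t - θ * Complex.I)) * (1 - Complex.exp (-(t - θ * Complex.I)))⁻¹).re := by
  set r := exp (-t) with hr
  have hr1 : r < 1 := by simpa [hr] using ht
  have hr0 : 0 < r := exp_pos _
  have hrt : 1 - r ≤ t := by linarith [Real.add_one_le_exp (-t)]
  have hr3 : 36 / 100 ≤ r := by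
    have h1 : exp (-1) ≤ r := Real.exp_le_exp.mpr (by linarith)
    have h2 : (36 : ℝ) / 100 ≤ exp (-1) := by
      rw [exp_neg, le_inv_comm₀ (by norm_num) (exp_pos _)]
      exact Real.exp_one_lt_d9.le.trans (by norm_num)
    linarith
  have hz : Complex.exp (-(t - θ * Complex.I)) = (r * cos θ : ℝ) + (r * sin θ : ℝ) * Complex.I := by
    rw [show -((t : ℂ) - θ * Complex.I) = ((-t : ℝ) : ℂ) + θ * Complex.I by push_cast; ring,
      Complex.exp_add, Complex.exp_mul_I, ← Complex.ofReal_exp, ← Complex.ofReal_cos,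
      ← Complex.ofReal_sin, ← hr, Complex.ofReal_mul, Complex.ofReal_mul]
    ring
  have hcos : cos θ ≤ 1 - 2 / π ^ 2 * θ ^ 2 := Real.cos_le_one_sub_mul_cos_sq hθ
  have hsc := Real.sin_sq_add_cos_sq θ
  generalize cos θ = c at hz hcos hsc
  generalize sin θ = d at hz hsc
  set b := r * (1 - c) with hb
  have hbθ : θ ^ 2 / 20 ≤ b := by
    have h1 : 2 / 10 * θ ^ 2 ≤ 1 - c := by
      have hπ : (2 : ℝ) / 10 ≤ 2 / π ^ 2 := by
        gcongr
        nlinarith [Real.pi_lt_d2, Real.pi_pos]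
      nlinarith [mul_le_mul_of_nonneg_right hπ (sq_nonneg θ)]
    nlinarith [sq_nonneg θ]
  have hb0 : 0 ≤ b := le_trans (by positivity) hbθ
  have ha : 0 < 1 - r := by linarith
  have hD : 0 < (1 - r) ^ 2 + 2 * b := by positivity
  have hre : (Complex.exp (-(t - θ * Complex.I)) *
      (1 - Complex.exp (-(t - θ * Complex.I)))⁻¹).re = (1 - r + b) / ((1 - r) ^ 2 + 2 * b) - 1 := by
    have hns : Complex.normSq (1 - Complex.exp (-(t - θ * Complex.I))) = (1 - r) ^ 2 + 2 * b := by
      rw [hz, Complex.normSq_apply]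
      simp
      rw [hb]
      linear_combination r ^ 2 * hsc
    rw [Complex.mul_re, Complex.inv_re, Complex.inv_im, hns, hz]
    simp
    rw [eq_sub_iff_add_eq]
    field_simp
    rw [hb]
    linear_combination -r ^ 2 * hsc
  have heq : r * (1 - r)⁻¹ - ((1 - r + b) / ((1 - r) ^ 2 + 2 * b) - 1) =
      b * (1 + r) / ((1 - r) * ((1 - r) ^ 2 + 2 * b)) := by
    have := ha.ne'
    field_simp
    ring
  rw [hre, heq, div_le_div_iff₀]
  · have h1 : θ ^ 2 * ((1 - r) ^ 2 + 2 * b) ≤ b * (1 + r) * (20 * (t ^ 2 + θ ^ 2)) := by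
      have h2 : (1 - r) ^ 2 ≤ t ^ 2 := by gcongr
      have h3 : θ ^ 2 * (1 - r) ^ 2 ≤ 20 * b * t ^ 2 := by
        have : θ ^ 2 ≤ 20 * b := by linarith
        gcongr
      have h4 : 0 ≤ b * r * (t ^ 2 + θ ^ 2) := by positivity
      have h5 : 0 ≤ b * θ ^ 2 := by positivity
      nlinarith
    calc θ ^ 2 * ((1 - r) * ((1 - r) ^ 2 + 2 * b)) =
          (1 - r) * (θ ^ 2 * ((1 - r) ^ 2 + 2 * b)) := by ring
      _ ≤ t * (b * (1 + r) * (20 * (t ^ 2 + θ ^ 2))) := by gcongr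
      _ = _ := by ring
  · positivity
  · positivity

lemma re_logGen_sub_le {t θ : ℝ} (ht : 0 < t) (ht1 : t ≤ 1) (hθ : |θ| ≤ π) :
    (logGen (t - θ * Complex.I) - logGen t).re ≤ -(θ ^ 2 / (20 * (t * (t ^ 2 + θ ^ 2)))) := by
  have hs : 0 < ((t : ℂ) - θ * Complex.I).re := by simpa using ht
  have hsum := (hasSum_lambertSum 0 ht).sub (Complex.hasSum_re (hasSum_logGen_line ht θ))
  have hrow := (tsum_exp_neg_succ_mul ht).sub (Complex.hasSum_re
    ((hasSum_geometric_of_norm_lt_one (norm_exp_neg_lt_one hs)).mul_left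
      (Complex.exp (-(t - θ * Complex.I)))))
  have hle := hasSum_le_inj (fun k : ℕ => ((0, k) : ℕ × ℕ)) (fun a b h => by simpa using h)
    (fun x _ => ?_) (fun k => ?_) hrow hsum
  · have := sq_div_le_of_one_sub_exp_neg ht ht1 hθ
    rw [logGen_ofReal, Complex.sub_re, Complex.ofReal_re]
    linarith
  · rw [Complex.re_ofReal_mul, Complex.exp_ofReal_mul_I_re]
    have := lambertSum_term_nonneg 0 t x
    nlinarith [Real.cos_le_one (idx x * θ)]
  · rw [← logGen_term_eq]
    apply le_of_eq
    congr 1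
    · simp [idx]
    · rw [← pow_succ', ← Complex.exp_nat_mul]
      congr 1
      simp [idx]
      ring_nf

/-- The centred and normalised generating function on the circle of radius `exp (-t)`. -/
noncomputable def charFun (t θ : ℝ) : ℂ :=
  Complex.exp (logGen (t - θ * Complex.I) - logGen t - θ * lambertSum 1 t * Complex.I)

/-- The scale on which `charFun t` varies, up to a constant. -/
noncomputable def scale (t : ℝ) : ℝ := t * √t

lemma scale_pos {t : ℝ} (ht : 0 < t) : 0 < scale t := by unfold scale; positivity

lemma scale_sq {t : ℝ} (ht : 0 < t) : scale t ^ 2 = t ^ 3 := by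
  rw [scale, mul_pow, Real.sq_sqrt ht.le]
  ring

lemma tendsto_sqrt_zero : Tendsto (fun t : ℝ => √t) (𝓝[>] 0) (𝓝 0) := by
  simpa using (Real.continuous_sqrt.tendsto 0).mono_left nhdsWithin_le_nhds

lemma tendsto_scale : Tendsto scale (𝓝[>] 0) (𝓝[>] 0) := by
  refine tendsto_nhdsWithin_iff.mpr ⟨?_, ?_⟩
  · unfold scale
    simpa using tendsto_id_zero.mul tendsto_sqrt_zero
  · filter_upwards [self_mem_nhdsWithin] with t ht using scale_pos ht

lemma continuous_charFun {t : ℝ} (ht : 0 < t) : Continuous (charFun t) := by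
  have := continuous_logGen_line ht
  unfold charFun
  fun_prop

lemma tendsto_charFun (u : ℝ) : Tendsto (fun t => charFun t (scale t * u)) (𝓝[>] 0)
    (𝓝 (Complex.exp (-(π ^ 2 / 6) * u ^ 2))) := by
  refine (Complex.continuous_exp.tendsto _).comp ?_
  have hmain : Tendsto (fun t => -(((u ^ 2 / 2 * (t ^ (2 + 1) * lambertSum 2 t) : ℝ)) : ℂ))
      (𝓝[>] 0) (𝓝 (-(π ^ 2 / 6) * u ^ 2 : ℂ)) := by
    have := ((tendsto_pow_mul_lambertSum tendsto_innerSum_two).const_mul (u ^ 2 / 2))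
    have := ((Complex.continuous_ofReal.tendsto _).comp this).neg
    rw [show (-(π ^ 2 / 6) * u ^ 2 : ℂ) = -((u ^ 2 / 2 * (π ^ 2 / 6 * 2) : ℝ) : ℂ) by
      push_cast; ring]
    exact this
  have herr : Tendsto (fun t => logGen (t - (scale t * u : ℝ) * Complex.I) - logGen t -
      (scale t * u : ℝ) * lambertSum 1 t * Complex.I +
      ((scale t * u : ℝ) : ℂ) ^ 2 * lambertSum 2 t / 2) (𝓝[>] 0) (𝓝 0) := by
    have hb : Tendsto
        (fun t : ℝ => 4 * |u| ^ 3 * (π ^ 2 / 6 * (Nat.factorial 3 * 2 ^ (3 + 1))) * √t)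
        (𝓝[>] 0) (𝓝 0) := by
      simpa using tendsto_sqrt_zero.const_mul
        (4 * |u| ^ 3 * (π ^ 2 / 6 * (Nat.factorial 3 * 2 ^ (3 + 1))))
    refine squeeze_zero_norm' ?_ hb
    filter_upwards [self_mem_nhdsWithin] with t ht
    have ht : 0 < t := ht
    refine (norm_logGen_sub_taylor_le ht _).trans ?_
    have h3 := pow_mul_lambertSum_le 3 ht
    have hτ : scale t ^ 3 = t ^ (3 + 1) * √t := by
      rw [pow_succ, scale_sq ht, scale]
      ring
    rw [abs_mul, abs_of_pos (scale_pos ht), mul_pow, hτ]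
    calc _ = 4 * |u| ^ 3 * (t ^ (3 + 1) * lambertSum 3 t) * √t := by ring
      _ ≤ _ := by gcongr
  have := hmain.add herr
  rw [add_zero] at this
  refine this.congr' ?_
  filter_upwards [self_mem_nhdsWithin] with t ht
  have h2 : (((scale t * u : ℝ) : ℂ)) ^ 2 = ((t ^ 3 * u ^ 2 : ℝ) : ℂ) := by
    rw [← Complex.ofReal_pow, mul_pow, scale_sq ht]
  rw [h2]
  push_cast
  ring

lemma exp_neg_le_of_window {t u : ℝ} (ht : 0 < t) (hu : u ^ 2 * t ^ 3 ≤ 10) :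
    exp (-(u ^ 2 / (20 * (1 + u ^ 2 * t)))) ≤ 10 ^ 15 * ((1 + u ^ 2)⁻¹) ^ 2 := by
  set v := u ^ 2 with hv
  have hv0 : 0 ≤ v := sq_nonneg u
  set E := v / (20 * (1 + v * t)) with hE
  have hE0 : 0 ≤ E := by positivity
  rw [exp_neg, inv_pow, ← div_eq_mul_inv, inv_le_comm₀ (exp_pos _) (by positivity), inv_div]
  rw [div_le_iff₀ (by norm_num)]
  rcases le_total v 1 with h | h
  · nlinarith [Real.one_le_exp hE0]
  · have h6 := Real.pow_div_factorial_le_exp E hE0 6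
    have hden : (1 + v * t) ^ 3 ≤ 44 * v ^ 2 := by
      have hx : 0 ≤ v * t := by positivity
      have h1 : (1 + v * t) ^ 3 ≤ 4 * (1 + (v * t) ^ 3) := by
        nlinarith [mul_nonneg (by positivity : 0 ≤ 1 + v * t) (sq_nonneg (v * t - 1))]
      have h2 : (v * t) ^ 3 ≤ 10 * v ^ 2 := by
        calc (v * t) ^ 3 = v ^ 2 * (v * t ^ 3) := by ring
          _ ≤ v ^ 2 * 10 := by gcongr
          _ = _ := by ring
      nlinarith
    have hE3 : v / 352000 ≤ E ^ 3 := by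
      rw [hE, div_pow, div_le_div_iff₀ (by norm_num) (by positivity), mul_pow]
      calc v * (20 ^ 3 * (1 + v * t) ^ 3) ≤ v * (20 ^ 3 * (44 * v ^ 2)) := by gcongr
        _ = _ := by ring
    have hE6 : (v / 352000) ^ 2 ≤ E ^ 6 := by
      calc (v / 352000) ^ 2 ≤ (E ^ 3) ^ 2 := by gcongr
        _ = _ := by ring
    rw [show ((Nat.factorial 6 : ℕ) : ℝ) = 720 by norm_num [Nat.factorial]] at h6
    have h7 : (1 + v) ^ 2 ≤ 4 * v ^ 2 := by nlinarith
    rw [div_pow] at hE6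
    nlinarith

lemma norm_charFun_le {t u : ℝ} (ht : 0 < t) (ht1 : t ≤ 1) (hu : |scale t * u| ≤ π) :
    ‖charFun t (scale t * u)‖ ≤ 10 ^ 15 * ((1 + u ^ 2)⁻¹) ^ 2 := by
  have hsq : (scale t * u) ^ 2 = u ^ 2 * t ^ 3 := by
    rw [mul_pow, scale_sq ht]
    ring
  have hwin : u ^ 2 * t ^ 3 ≤ 10 := by
    rw [← hsq, ← sq_abs]
    nlinarith [Real.pi_lt_d2, Real.pi_pos, abs_nonneg (scale t * u)]
  refine le_trans ?_ (exp_neg_le_of_window ht hwin)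
  rw [charFun, Complex.norm_exp]
  gcongr
  have h := re_logGen_sub_le ht ht1 hu
  rw [hsq] at h
  have h2 : u ^ 2 * t ^ 3 / (20 * (t * (t ^ 2 + u ^ 2 * t ^ 3))) =
      u ^ 2 / (20 * (1 + u ^ 2 * t)) := by
    field_simp
  rw [h2] at h
  rw [Complex.sub_re]
  simpa using h

lemma tendsto_integral_charFun {g : ℝ → ℝ → ℂ} {g₀ : ℝ → ℂ}
    (hcont : ∀ t, Continuous (g t)) (hbound : ∀ t, 0 < t → ∀ u, ‖g t u‖ ≤ 1 + u ^ 2)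
    (hlim : ∀ u, Tendsto (fun t => g t u) (𝓝[>] 0) (𝓝 (g₀ u))) :
    Tendsto (fun t => ∫ u in (-(π / scale t))..(π / scale t), charFun t (scale t * u) * g t u)
      (𝓝[>] 0) (𝓝 (∫ u : ℝ, Complex.exp (-(π ^ 2 / 6) * u ^ 2) * g₀ u)) := by
  have hle {t : ℝ} (ht : 0 < t) : -(π / scale t) ≤ π / scale t := by
    have := div_pos Real.pi_pos (scale_pos ht)
    linarith
  have key : Tendsto (fun t => ∫ u : ℝ, (Set.Ioc (-(π / scale t)) (π / scale t)).indicator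
      (fun u => charFun t (scale t * u) * g t u) u)
      (𝓝[>] 0) (𝓝 (∫ u : ℝ, Complex.exp (-(π ^ 2 / 6) * u ^ 2) * g₀ u)) := by
    refine MeasureTheory.tendsto_integral_filter_of_dominated_convergence
      (fun u => 10 ^ 15 * (1 + u ^ 2)⁻¹) ?_ ?_ (integrable_inv_one_add_sq.const_mul _) ?_
    · filter_upwards [self_mem_nhdsWithin] with t ht
      have h1 := continuous_charFun ht
      have h2 := hcont t
      exact (by fun_prop :
        Continuous fun u => charFun t (scale t * u) * g t u).aestronglyMeasurable.indicator
        measurableSet_Ioc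
    · filter_upwards [Ioc_mem_nhdsGT one_pos] with t ht
      refine .of_forall fun u => ?_
      have hτ := scale_pos ht.1
      rw [Set.indicator_apply]
      split_ifs with hu
      · have hu' : |scale t * u| ≤ π := by
          rw [abs_mul, abs_of_pos hτ, mul_comm, ← le_div_iff₀ hτ]
          exact abs_le.mpr ⟨hu.1.le, hu.2⟩
        calc _ ≤ 10 ^ 15 * ((1 + u ^ 2)⁻¹) ^ 2 * (1 + u ^ 2) := by
              rw [norm_mul]
              gcongr
              · exact norm_charFun_le ht.1 ht.2 hu'
              · exact hbound t ht.1 u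
          _ = _ := by field_simp
      · rw [norm_zero]
        positivity
    · refine .of_forall fun u => ?_
      refine ((tendsto_charFun u).mul (hlim u)).congr' ?_
      have htop : Tendsto (fun t => π / scale t) (𝓝[>] 0) atTop :=
        (tendsto_inv_nhdsGT_zero.comp tendsto_scale).const_mul_atTop Real.pi_pos
      filter_upwards [htop.eventually_gt_atTop |u|] with t ht
      rw [Set.indicator_of_mem]
      have := abs_lt.mp ht
      exact ⟨this.1, this.2.le⟩
  refine key.congr' ?_
  filter_upwards [self_mem_nhdsWithin] with t ht
  rw [MeasureTheory.integral_indicator measurableSet_Ioc, intervalIntegral.integral_of_le (hle ht)]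

lemma hasDerivAt_exp_neg_mul_sq (b u : ℝ) :
    HasDerivAt (fun u : ℝ => exp (-b * u ^ 2)) (exp (-b * u ^ 2) * (-b * (2 * u))) u := by
  simpa using ((hasDerivAt_pow 2 u).const_mul (-b)).exp

lemma integrable_sq_mul_exp_neg_mul_sq {b : ℝ} (hb : 0 < b) :
    MeasureTheory.Integrable fun u : ℝ => u ^ 2 * exp (-b * u ^ 2) := by
  simpa using integrable_rpow_mul_exp_neg_mul_sq hb (s := 2) (by norm_num)

lemma integral_mul_exp_neg_mul_sq {b : ℝ} (hb : 0 < b) :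
    ∫ u : ℝ, u * exp (-b * u ^ 2) = 0 := by
  have h := MeasureTheory.integral_eq_zero_of_hasDerivAt_of_integrable
    (hasDerivAt_exp_neg_mul_sq b)
    (((integrable_mul_exp_neg_mul_sq hb).const_mul (-(2 * b))).congr (.of_forall fun u => by ring))
    (integrable_exp_neg_mul_sq hb)
  have h2 : ∀ u : ℝ, exp (-b * u ^ 2) * (-b * (2 * u)) = (-(2 * b)) * (u * exp (-b * u ^ 2)) :=
    fun u => by ring
  simp_rw [h2] at h
  rw [MeasureTheory.integral_const_mul] at h
  exact (mul_eq_zero.mp h).resolve_left (by linarith)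

lemma integral_sq_mul_exp_neg_mul_sq {b : ℝ} (hb : 0 < b) :
    ∫ u : ℝ, u ^ 2 * exp (-b * u ^ 2) = √(π / b) / (2 * b) := by
  have hi := integrable_exp_neg_mul_sq hb
  have hi2 := (integrable_sq_mul_exp_neg_mul_sq hb).const_mul (2 * b)
  have h2 : ∀ u : ℝ, 1 * exp (-b * u ^ 2) + u * (exp (-b * u ^ 2) * (-b * (2 * u))) =
      exp (-b * u ^ 2) - 2 * b * (u ^ 2 * exp (-b * u ^ 2)) := fun u => by ring
  have h := MeasureTheory.integral_eq_zero_of_hasDerivAt_of_integrable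
    (fun u => (hasDerivAt_id u).mul (hasDerivAt_exp_neg_mul_sq b u))
    ((hi.sub hi2).congr (.of_forall fun u => (h2 u).symm))
    (integrable_mul_exp_neg_mul_sq hb)
  have h3 : ∫ u : ℝ, (exp (-b * u ^ 2) - 2 * b * (u ^ 2 * exp (-b * u ^ 2))) = 0 := by
    rw [← h]
    exact MeasureTheory.integral_congr_ae (.of_forall fun u => (h2 u).symm)
  rw [MeasureTheory.integral_sub hi hi2, integral_gaussian, MeasureTheory.integral_const_mul] at h3
  rw [eq_div_iff (by positivity)]
  linarith

/-- The weighted integral of `charFun` over its rescaled period. -/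
noncomputable def windowIntegral (g : ℝ → ℝ → ℝ) (t : ℝ) : ℂ :=
  ∫ u in (-(π / scale t))..(π / scale t), charFun t (scale t * u) * (g t u : ℂ)

lemma tendsto_windowIntegral {g : ℝ → ℝ → ℝ} {g₀ : ℝ → ℝ}
    (hcont : ∀ t, Continuous (g t)) (hbound : ∀ t, 0 < t → ∀ u, |g t u| ≤ 1 + u ^ 2)
    (hlim : ∀ u, Tendsto (fun t => g t u) (𝓝[>] 0) (𝓝 (g₀ u))) :
    Tendsto (windowIntegral g) (𝓝[>] 0)
      (𝓝 ((∫ u : ℝ, g₀ u * exp (-(π ^ 2 / 6) * u ^ 2) : ℝ) : ℂ)) := by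
  have h := tendsto_integral_charFun (g := fun t u => (g t u : ℂ)) (g₀ := fun u => (g₀ u : ℂ))
    (fun t => Complex.continuous_ofReal.comp (hcont t))
    (fun t ht u => by simpa using hbound t ht u)
    (fun u => (Complex.continuous_ofReal.tendsto _).comp (hlim u))
  rw [← integral_complex_ofReal]
  refine (h.congr fun t => rfl).trans (le_of_eq (congrArg 𝓝 ?_))
  refine MeasureTheory.integral_congr_ae (.of_forall fun u => ?_)
  simp
  ring

/-- The weight `sin θ` at `θ = scale t * u`, rescaled. -/
noncomputable def sinWeight (t u : ℝ) : ℝ := sin (scale t * u) / scale t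

/-- The weight `1 - cos θ` at `θ = scale t * u`, rescaled. -/
noncomputable def cosWeight (t u : ℝ) : ℝ := (1 - cos (scale t * u)) / scale t ^ 2

lemma tendsto_sinWeight (u : ℝ) : Tendsto (fun t => sinWeight t u) (𝓝[>] 0) (𝓝 u) := by
  have h : HasDerivAt (fun x : ℝ => sin (x * u)) u 0 := by
    simpa using ((hasDerivAt_id (0 : ℝ)).mul_const u).sin
  refine (h.tendsto_slope_zero_right.comp tendsto_scale).congr fun t => ?_
  simp [sinWeight, div_eq_mul_inv, mul_comm]

lemma cosWeight_eq (t u : ℝ) : cosWeight t u = 2 * sinWeight t (u / 2) ^ 2 := by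
  have h : cos (scale t * u) = 1 - 2 * sin (scale t * (u / 2)) ^ 2 := by
    rw [show scale t * u = 2 * (scale t * (u / 2)) by ring, Real.cos_two_mul, Real.cos_sq']
    ring
  rw [cosWeight, sinWeight, h, div_pow]
  ring

lemma tendsto_cosWeight (u : ℝ) : Tendsto (fun t => cosWeight t u) (𝓝[>] 0) (𝓝 (u ^ 2 / 2)) := by
  simp_rw [cosWeight_eq]
  convert ((tendsto_sinWeight (u / 2)).pow 2).const_mul 2 using 2
  ring

lemma abs_sinWeight_le {t : ℝ} (ht : 0 < t) (u : ℝ) : |sinWeight t u| ≤ |u| := by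
  have hτ := scale_pos ht
  rw [sinWeight, abs_div, abs_of_pos hτ, div_le_iff₀ hτ]
  calc _ ≤ |scale t * u| := Real.abs_sin_le_abs
    _ = _ := by rw [abs_mul, abs_of_pos hτ, mul_comm]

lemma continuous_sinWeight (t : ℝ) : Continuous (sinWeight t) := by unfold sinWeight; fun_prop

lemma continuous_cosWeight (t : ℝ) : Continuous (cosWeight t) := by unfold cosWeight; fun_prop

/-- The limiting Gaussian mass. -/
noncomputable def gaussMass : ℝ := √(π / (π ^ 2 / 6))

lemma gaussMass_pos : 0 < gaussMass := by unfold gaussMass; positivity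

lemma tendsto_mass : Tendsto (fun t => (windowIntegral (fun _ _ => 1) t).re) (𝓝[>] 0)
    (𝓝 gaussMass) := by
  have h := tendsto_windowIntegral (g := fun _ _ => 1) (g₀ := fun _ => 1)
    (fun t => continuous_const) (fun t _ u => by simpa using sq_nonneg u)
    (fun u => tendsto_const_nhds)
  simp_rw [one_mul, integral_gaussian] at h
  exact (Complex.continuous_re.tendsto _).comp h

lemma tendsto_sinMoment : Tendsto (fun t => (windowIntegral sinWeight t).im) (𝓝[>] 0) (𝓝 0) := by
  have h := tendsto_windowIntegral continuous_sinWeight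
    (fun t ht u => (abs_sinWeight_le ht u).trans
      (by nlinarith [sq_nonneg (|u| - 1), sq_abs u, abs_nonneg u])) tendsto_sinWeight
  rw [integral_mul_exp_neg_mul_sq (by positivity)] at h
  exact (Complex.continuous_im.tendsto _).comp h

lemma tendsto_cosMoment : Tendsto (fun t => (windowIntegral cosWeight t).re) (𝓝[>] 0)
    (𝓝 (gaussMass * 3 / (2 * π ^ 2))) := by
  have h := tendsto_windowIntegral continuous_cosWeight
    (fun t ht u => by
      have h1 := abs_sinWeight_le ht (u / 2)
      rw [cosWeight_eq, abs_of_nonneg (by positivity)]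
      have h2 := sq_le_sq.mpr (by simpa using h1)
      nlinarith [sq_nonneg u]) tendsto_cosWeight
  have h2 : ∫ u : ℝ, u ^ 2 / 2 * exp (-(π ^ 2 / 6) * u ^ 2) = gaussMass * 3 / (2 * π ^ 2) := by
    have := integral_sq_mul_exp_neg_mul_sq (b := π ^ 2 / 6) (by positivity)
    simp_rw [div_mul_eq_mul_div]
    rw [MeasureTheory.integral_div]
    simp_rw [neg_div'] at this ⊢
    rw [this, gaussMass]
    field_simp
    ring
  rw [h2] at h
  exact (Complex.continuous_re.tendsto _).comp h

/-- The local-limit factor of `p (n + k)`. -/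
noncomputable def localFactor (t k : ℝ) : ℝ :=
  (windowIntegral (fun _ _ => 1) t).re - k ^ 2 * scale t ^ 2 * (windowIntegral cosWeight t).re +
    k * scale t * (windowIntegral sinWeight t).im

lemma exp_neg_int_mul_I {k : ℝ} (hk : k = -1 ∨ k = 0 ∨ k = 1) (θ : ℝ) :
    Complex.exp (-(k * θ * Complex.I)) =
      1 - k ^ 2 * ((1 - cos θ : ℝ) : ℂ) - k * (sin θ : ℝ) * Complex.I := by
  rw [show -((k : ℂ) * θ * Complex.I) = ((-(k * θ) : ℝ) : ℂ) * Complex.I by push_cast; ring,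
    Complex.exp_mul_I, ← Complex.ofReal_cos, ← Complex.ofReal_sin, Real.cos_neg, Real.sin_neg]
  rcases hk with rfl | rfl | rfl <;> (simp; try ring)

lemma p_eq {t : ℝ} (ht : 0 < t) {k : ℝ} (hk : k = -1 ∨ k = 0 ∨ k = 1) {m : ℕ}
    (hm : (m : ℝ) = lambertSum 1 t + k) :
    p m = exp (m * t) * exp (lambertSum 0 t) * (scale t / (2 * π)) * localFactor t k := by
  have hτ := scale_pos ht
  have hcauchy := integral_exp_logGen ht m
  have hc := continuous_charFun ht
  have hpt (θ : ℝ) : Complex.exp (logGen (t - θ * Complex.I)) * Complex.exp (-(m * θ * Complex.I)) =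
      exp (lambertSum 0 t) * (charFun t θ * Complex.exp (-(k * θ * Complex.I))) := by
    have hm' : (m : ℂ) = lambertSum 1 t + k := by exact_mod_cast hm
    rw [charFun, logGen_ofReal, hm', Complex.ofReal_exp, ← Complex.exp_add, ← Complex.exp_add,
      ← Complex.exp_add]
    ring_nf
  simp_rw [hpt] at hcauchy
  rw [intervalIntegral.integral_const_mul] at hcauchy
  have hsub := intervalIntegral.integral_comp_mul_left (a := -(π / scale t)) (b := π / scale t)
    (fun θ : ℝ => charFun t θ * Complex.exp (-(k * θ * Complex.I))) hτ.ne'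
  rw [show scale t * (-(π / scale t)) = -π by field_simp,
    show scale t * (π / scale t) = π by field_simp] at hsub
  have hexp : ∫ u in (-(π / scale t))..(π / scale t), charFun t (scale t * u) *
      Complex.exp (-(k * (scale t * u : ℝ) * Complex.I)) =
      windowIntegral (fun _ _ => 1) t - k ^ 2 * scale t ^ 2 * windowIntegral cosWeight t -
        k * scale t * Complex.I * windowIntegral sinWeight t := by
    have h1 := continuous_sinWeight t
    have h2 := continuous_cosWeight t
    rw [windowIntegral, windowIntegral, windowIntegral, ← intervalIntegral.integral_const_mul,
      ← intervalIntegral.integral_const_mul, ← intervalIntegral.integral_sub,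
      ← intervalIntegral.integral_sub]
    · refine intervalIntegral.integral_congr fun u _ => ?_
      rw [exp_neg_int_mul_I hk, sinWeight, cosWeight]
      have : (scale t : ℂ) ≠ 0 := by exact_mod_cast hτ.ne'
      push_cast
      field_simp
    all_goals exact (by fun_prop : Continuous _).intervalIntegrable _ _
  rw [hexp] at hsub
  have hsub' : ∫ θ in (-π)..π, charFun t θ * Complex.exp (-(k * θ * Complex.I)) =
      scale t * (windowIntegral (fun _ _ => 1) t -
        k ^ 2 * scale t ^ 2 * windowIntegral cosWeight t -
        k * scale t * Complex.I * windowIntegral sinWeight t) := by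
    rw [hsub, Complex.real_smul, ← mul_assoc, ← Complex.ofReal_mul, mul_inv_cancel₀ hτ.ne']
    simp
  rw [hsub'] at hcauchy
  have hre := congrArg Complex.re hcauchy
  have h1 : (2 * π * p m * Complex.exp (-(m * t)) : ℂ) =
      ((2 * π * p m * exp (-(m * t)) : ℝ) : ℂ) := by
    push_cast
    rfl
  have h2 : ((k : ℂ) ^ 2 * scale t ^ 2 * windowIntegral cosWeight t).re =
      k ^ 2 * scale t ^ 2 * (windowIntegral cosWeight t).re := by
    rw [← Complex.re_ofReal_mul]
    push_cast
    rfl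
  have h3 : ((k : ℂ) * scale t * Complex.I * windowIntegral sinWeight t).re =
      -(k * scale t * (windowIntegral sinWeight t).im) := by
    rw [← Complex.ofReal_mul, mul_assoc, Complex.re_ofReal_mul, Complex.I_mul_re]
    ring
  rw [h1, Complex.ofReal_re, Complex.re_ofReal_mul, Complex.re_ofReal_mul, Complex.sub_re,
    Complex.sub_re, h2, h3, sub_neg_eq_add, ← localFactor, exp_neg] at hre
  field_simp at hre ⊢
  linarith

lemma exists_saddle {n : ℕ} (hn : lambertSum 1 1 ≤ n) : ∃ t : ℝ, 0 < t ∧ lambertSum 1 t = n := by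
  have hlim := tendsto_pow_mul_lambertSum tendsto_innerSum_one
  have hev : ∀ᶠ t : ℝ in 𝓝[>] 0, (n : ℝ) ≤ lambertSum 1 t := by
    have h0 : Tendsto (fun t : ℝ => t ^ (1 + 1) * (n : ℝ)) (𝓝[>] 0) (𝓝 0) := by
      simpa using (tendsto_id_zero.pow 2).mul_const (n : ℝ)
    filter_upwards [h0.eventually_lt hlim (by positivity), self_mem_nhdsWithin] with t h1 ht
    have ht : 0 < t := ht
    exact (lt_of_mul_lt_mul_left h1 (by positivity)).le
  obtain ⟨ε, hε, hε1⟩ := (hev.and (Ioc_mem_nhdsGT one_pos)).exists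
  have hc : ContinuousOn (lambertSum 1) (Set.Icc ε 1) :=
    (continuousOn_lambertSum 1).mono fun t ht => hε1.1.trans_le ht.1
  obtain ⟨t, ht, h⟩ := intermediate_value_Icc' hε1.2 hc ⟨hn, hε⟩
  exact ⟨t, hε1.1.trans_le ht.1, h⟩

lemma exists_saddle_seq : ∃ t : ℕ → ℝ, Tendsto t atTop (𝓝[>] 0) ∧
    ∀ᶠ n in atTop, 0 < t n ∧ lambertSum 1 (t n) = n := by
  choose! t ht using fun (n : ℕ) (hn : lambertSum 1 1 ≤ n) => exists_saddle hn
  have hev : ∀ᶠ n : ℕ in atTop, 0 < t n ∧ lambertSum 1 (t n) = n := by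
    filter_upwards [tendsto_natCast_atTop_atTop.eventually_ge_atTop (lambertSum 1 1)] with n hn
    exact ht n hn
  refine ⟨t, tendsto_nhdsWithin_iff.mpr ⟨?_, hev.mono fun n hn => hn.1⟩, hev⟩
  have hb : Tendsto (fun n : ℕ => √(π ^ 2 / 6 * (Nat.factorial 1 * 2 ^ (1 + 1)) / n)) atTop
      (𝓝 0) := by
    have h := (tendsto_const_div_atTop_nhds_zero_nat
      (π ^ 2 / 6 * (Nat.factorial 1 * 2 ^ (1 + 1)))).sqrt
    rwa [Real.sqrt_zero] at h
  refine squeeze_zero' (hev.mono fun n hn => hn.1.le) ?_ hb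
  filter_upwards [hev, eventually_gt_atTop 0] with n hn hn0
  have h := pow_mul_lambertSum_le 1 hn.1
  rw [hn.2] at h
  apply Real.le_sqrt_of_sq_le
  rw [le_div_iff₀ (by exact_mod_cast hn0)]
  exact h

lemma tendsto_log_one_add_div {ι : Type*} {l : Filter ι} {y s : ι → ℝ} {a : ℝ}
    (hs : Tendsto s l (𝓝 0)) (hs0 : ∀ᶠ i in l, s i ≠ 0)
    (h : Tendsto (fun i => y i / s i) l (𝓝 a)) :
    Tendsto (fun i => log (1 + y i) / s i) l (𝓝 a) := by
  have hy : Tendsto y l (𝓝 0) := by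
    have := hs.mul h
    rw [zero_mul] at this
    refine this.congr' (hs0.mono fun i hi => ?_)
    field_simp
  have hd : HasDerivAt (fun x : ℝ => log (1 + x)) 1 0 := by
    simpa using ((hasDerivAt_id (0 : ℝ)).const_add 1).log (by simp)
  have ho : (fun i => log (1 + y i) - y i) =o[l] y := by
    simpa [Function.comp_def] using hd.isLittleO.comp_tendsto hy
  have hO : y =O[l] s :=
    Asymptotics.isBigO_of_div_tendsto_nhds (hs0.mono fun i hi h0 => absurd h0 hi) a h
  have := ((ho.trans_isBigO hO).tendsto_div_nhds_zero).add h
  rw [zero_add] at this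
  refine this.congr fun i => ?_
  rw [← add_div, sub_add_cancel]

lemma tendsto_localFactor (k : ℝ) :
    Tendsto (fun t => localFactor t k) (𝓝[>] 0) (𝓝 gaussMass) := by
  have hs := tendsto_scale.mono_right nhdsWithin_le_nhds
  simpa [localFactor] using
    (tendsto_mass.sub (((hs.pow 2).const_mul (k ^ 2)).mul tendsto_cosMoment)).add
      ((hs.const_mul k).mul tendsto_sinMoment)

lemma eventually_localFactor_pos (k : ℝ) : ∀ᶠ t in 𝓝[>] 0, 0 < localFactor t k :=
  (tendsto_localFactor k).eventually_const_lt gaussMass_pos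

lemma tendsto_secondDiff_log_localFactor :
    Tendsto (fun t => (log (localFactor t 1) + log (localFactor t (-1)) -
      2 * log (localFactor t 0)) / t ^ 3) (𝓝[>] 0) (𝓝 (-3 / π ^ 2)) := by
  have hs := tendsto_scale.mono_right nhdsWithin_le_nhds
  have hm := gaussMass_pos
  have h3 : Tendsto (fun t : ℝ => t ^ 3) (𝓝[>] 0) (𝓝 0) := by simpa using tendsto_id_zero.pow 3
  have hpos : ∀ᶠ t : ℝ in 𝓝[>] 0, 0 < t := self_mem_nhdsWithin
  have hlim : Tendsto (fun t => (localFactor t 1 * localFactor t (-1) / localFactor t 0 ^ 2 - 1) /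
      t ^ 3) (𝓝[>] 0) (𝓝 (-3 / π ^ 2)) := by
    have := ((((tendsto_mass.const_mul (-2)).mul tendsto_cosMoment).add
      ((hs.pow 2).mul (tendsto_cosMoment.pow 2))).sub (tendsto_sinMoment.pow 2)).div
        (tendsto_mass.pow 2) (by positivity)
    convert this.congr' ?_ using 2
    · field_simp
      ring
    · filter_upwards [hpos, eventually_localFactor_pos 0] with t ht h0
      have hτ := scale_pos ht
      simp only [localFactor, ← scale_sq ht] at h0 ⊢
      norm_num [Pi.div_apply] at h0 ⊢
      field_simp
      ring
  refine (tendsto_log_one_add_div h3 (hpos.mono fun t ht => by positivity) hlim).congr' ?_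
  filter_upwards [eventually_localFactor_pos 0, eventually_localFactor_pos 1,
    eventually_localFactor_pos (-1)] with t h0 h1 h2
  rw [add_sub_cancel, log_div (by positivity) (by positivity), log_mul h1.ne' h2.ne', log_pow]
  norm_num

lemma tendsto_diff_log_localFactor :
    Tendsto (fun t => (log (localFactor t 1) - log (localFactor t (-1))) / t) (𝓝[>] 0) (𝓝 0) := by
  have hm := gaussMass_pos
  have hpos : ∀ᶠ t : ℝ in 𝓝[>] 0, 0 < t := self_mem_nhdsWithin
  have hlim : Tendsto (fun t => (localFactor t 1 / localFactor t (-1) - 1) / t) (𝓝[>] 0)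
      (𝓝 0) := by
    have := ((tendsto_sqrt_zero.const_mul 2).mul tendsto_sinMoment).div
      (tendsto_localFactor (-1)) hm.ne'
    simp only [mul_zero, zero_div] at this
    refine this.congr' ?_
    filter_upwards [hpos, eventually_localFactor_pos (-1)] with t ht h0
    rw [Pi.div_apply, div_sub_one h0.ne', div_div, mul_comm (localFactor t (-1)), ← div_div]
    congr 1
    simp only [localFactor, scale]
    field_simp
    ring
  refine (tendsto_log_one_add_div tendsto_id_zero (hpos.mono fun t ht => ht.ne') hlim).congr' ?_
  filter_upwards [eventually_localFactor_pos 1, eventually_localFactor_pos (-1)] with t h1 h2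
  rw [add_sub_cancel, log_div h1.ne' h2.ne']

lemma log_p_eq {t : ℝ} (ht : 0 < t) {k : ℝ} (hk : k = -1 ∨ k = 0 ∨ k = 1) {m : ℕ}
    (hm : (m : ℝ) = lambertSum 1 t + k) (hq : 0 < localFactor t k) :
    log (p m) = (lambertSum 1 t + k) * t + lambertSum 0 t + log (scale t / (2 * π)) +
      log (localFactor t k) := by
  have hτ := scale_pos ht
  rw [p_eq ht hk hm, log_mul (by positivity) hq.ne', log_mul (by positivity) (by positivity),
    log_mul (by positivity) (by positivity), log_exp, log_exp, hm]

lemma tendsto_mul_log_scale :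
    Tendsto (fun t => t * log (scale t / (2 * π))) (𝓝[>] 0) (𝓝 0) := by
  have h1 := (tendsto_log_mul_rpow_nhdsGT_zero zero_lt_one).const_mul (3 / 2)
  have h2 := tendsto_id_zero.mul_const (log (2 * π))
  have := h1.sub h2
  simp only [rpow_one, mul_zero, zero_mul, sub_zero] at this
  refine this.congr' ?_
  filter_upwards [self_mem_nhdsWithin] with t ht
  have ht : 0 < t := ht
  have hτ := scale_pos ht
  rw [log_div hτ.ne' (by positivity), scale, log_mul ht.ne' (by positivity), log_sqrt ht.le]
  ring

/-- The leading behaviour of `log (p (n - 1))`, where `n = lambertSum 1 t`. -/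
lemma tendsto_mul_log_main :
    Tendsto (fun t => t * ((lambertSum 1 t + -1) * t + lambertSum 0 t + log (scale t / (2 * π)) +
      log (localFactor t (-1)))) (𝓝[>] 0) (𝓝 (π ^ 2 / 3)) := by
  have h1 := tendsto_pow_mul_lambertSum tendsto_innerSum_one
  have h0 := tendsto_pow_mul_lambertSum tendsto_innerSum_zero
  have hq := tendsto_id_zero.mul ((tendsto_localFactor (-1)).log gaussMass_pos.ne')
  have := (((h1.sub (tendsto_id_zero.pow 2)).add h0).add tendsto_mul_log_scale).add hq
  convert this using 2
  · ring
  · ring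

end PartitionAsymptotics

open PartitionAsymptotics

theorem limit_second_difference_log_nth_root_p :
    Tendsto (fun n : ℕ =>
        (n : ℝ) ^ ((5 : ℝ) / 2) *
          (Real.log (p (n + 1)) / ((n : ℝ) + 1) + Real.log (p (n - 1)) / ((n : ℝ) - 1) -
            2 * Real.log (p n) / (n : ℝ)))
      atTop (nhds (3 * π / Real.sqrt 24)) := by
  obtain ⟨t, ht, hev⟩ := exists_saddle_seq
  have hω : 0 < π / √6 := by positivity
  have hω2 : (π / √6) ^ 2 = π ^ 2 / 6 := by rw [div_pow, sq_sqrt (by norm_num)]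
  have hνt : Tendsto (fun n : ℕ => √n * t n) atTop (𝓝 (π / √6)) := by
    have h := ((tendsto_pow_mul_lambertSum tendsto_innerSum_one).comp ht).sqrt
    rw [mul_one, ← hω2, sqrt_sq hω.le] at h
    refine h.congr' (hev.mono fun n hn => ?_)
    rw [Function.comp_apply, hn.2, sqrt_mul (sq_nonneg (t n)), sqrt_sq hn.1.le, mul_comm]
  have hlog : ∀ᶠ n : ℕ in atTop, ∀ k : ℝ, k = -1 ∨ k = 0 ∨ k = 1 → ∀ m : ℕ, (m : ℝ) = n + k →
      log (p m) = (lambertSum 1 (t n) + k) * t n + lambertSum 0 (t n) +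
        log (scale (t n) / (2 * π)) + log (localFactor (t n) k) := by
    filter_upwards [hev, ht.eventually (eventually_localFactor_pos 0),
      ht.eventually (eventually_localFactor_pos 1),
      ht.eventually (eventually_localFactor_pos (-1))] with n hn h0 h1 h2 k hk m hm
    refine log_p_eq hn.1 hk (by rw [hm, hn.2]) ?_
    rcases hk with rfl | rfl | rfl <;> assumption
  have hlog' : ∀ᶠ n : ℕ in atTop, _ := (hlog.and (eventually_ge_atTop 2)).mono fun n hn =>
    And.intro (hn.1 1 (by simp) (n + 1) (by push_cast; rfl)) <|
      And.intro (hn.1 0 (by simp) n (by simp)) <| hn.1 (-1) (by simp) (n - 1) (by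
        rw [Nat.cast_sub (by omega)]; push_cast; ring)
  have hA : Tendsto (fun n : ℕ => √n ^ 3 * (log (p (n + 1)) + log (p (n - 1)) - 2 * log (p n)))
      atTop (𝓝 ((π / √6) ^ 3 * (-3 / π ^ 2))) := by
    refine ((hνt.pow 3).mul (tendsto_secondDiff_log_localFactor.comp ht)).congr' ?_
    filter_upwards [hlog', hev] with n hn hp
    rw [hn.1, hn.2.1, hn.2.2, Function.comp_apply]
    have := hp.1
    field_simp
    ring
  have hB : Tendsto (fun n : ℕ => √n * (log (p (n + 1)) - log (p (n - 1))))
      atTop (𝓝 (π / √6 * (2 + 0))) := by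
    refine (hνt.mul ((tendsto_diff_log_localFactor.comp ht).const_add 2)).congr' ?_
    filter_upwards [hlog', hev] with n hn hp
    rw [hn.1, hn.2.2, Function.comp_apply]
    have := hp.1
    field_simp
    ring
  have hC : Tendsto (fun n : ℕ => log (p (n - 1)) / √n) atTop (𝓝 (π ^ 2 / 3 / (π / √6))) := by
    refine ((tendsto_mul_log_main.comp ht).div hνt hω.ne').congr' ?_
    filter_upwards [hlog', hev] with n hn hp
    rw [hn.2.2, Pi.div_apply, Function.comp_apply, mul_comm √n, mul_div_mul_left _ _ hp.1.ne']
  have hinv : Tendsto (fun n : ℕ => ((n : ℝ))⁻¹) atTop (𝓝 0) := tendsto_inv_atTop_nhds_zero_nat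
  have hB' := hB.div (hinv.const_add 1) (by norm_num)
  have hC' := (hC.const_mul 2).div ((hinv.const_add 1).mul (hinv.const_sub 1)) (by norm_num)
  have hfin := (hA.sub hB').add hC'
  refine (hfin.congr' ?_).trans (le_of_eq (congrArg 𝓝 ?_))
  · filter_upwards [eventually_ge_atTop 2] with n hn
    have hn1 : (2 : ℝ) ≤ n := by exact_mod_cast hn
    obtain ⟨ν, hν, hνn⟩ : ∃ ν : ℝ, 0 < ν ∧ (n : ℝ) = ν ^ 2 :=
      ⟨√n, by positivity, (sq_sqrt (by positivity)).symm⟩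
    have h5 : (n : ℝ) ^ ((5 : ℝ) / 2) = ν ^ 5 := by
      rw [hνn, ← rpow_natCast, ← rpow_mul hν.le, ← rpow_natCast]
      norm_num
    simp only [Pi.div_apply]
    rw [h5, hνn, sqrt_sq hν.le]
    have e1 : ν ^ 2 - 1 ≠ 0 := by rw [← hνn]; linarith
    field_simp
    ring
  · have h24 : √24 = 2 * √6 := by
      rw [show (24 : ℝ) = 2 ^ 2 * 6 by norm_num, sqrt_mul (by norm_num), sqrt_sq (by norm_num)]
    have h6 : √6 ^ 2 = 6 := sq_sqrt (by norm_num)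
    rw [h24]
    field_simp
    have h64 : √6 ^ 4 = 36 := by rw [show √6 ^ 4 = (√6 ^ 2) ^ 2 by ring, h6]; norm_num
    rw [h6]
    linarith
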